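/- The torsion subgroup of E(ℚ) is trivial: the only element of finite order in the group E(ℚ) is the identity O. Equivalently, every nonzero rational point of E has infinite order. -/

import Mathlib

open WeierstrassCurve

noncomputable section

/-- The elliptic curve `E : y² = x³ + 17` over `ℚ`. -/
def E : WeierstrassCurve ℚ := ⟨0, 0, 0, 0, 17⟩

open WeierstrassCurve.Affine

theorem padicValRat_two_seventeen : padicValRat 2 (17 : ℚ) = 0 := by
  have h : padicValNat 2 17 = 0 := padicValNat.eq_zero_of_not_dvd (by norm_num)
  exact (padicValRat.of_nat (p := 2) (n := 17)).trans (by rw [h]; rfl)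

theorem padicValRat_two_two_pow (n : ℕ) : padicValRat 2 ((2 : ℚ) ^ n) = n := by
  have h : padicValRat 2 (2 : ℚ) = 1 := padicValRat.self (p := 2) (by norm_num)
  rw [padicValRat.pow, h, mul_one]

/-- The map `x(P) ↦ x(2P)` on `y² = x³ + 17` strictly increases the absolute value of the
`2`-adic valuation. -/
theorem abs_padicValRat_two_lt {x z : ℚ} (hx : x ≠ 0) (hz : z ≠ 0) (hy : x ^ 3 + 17 ≠ 0)
    (h : 4 * (x ^ 3 + 17) * z = x * (x ^ 3 - 136)) :
    |padicValRat 2 x| < |padicValRat 2 z| := by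
  have hl : x ^ 3 + -136 ≠ 0 := by
    intro h0
    rw [sub_eq_add_neg, h0, mul_zero] at h
    simp_all
  have h17 := padicValRat_two_seventeen
  have h136 : padicValRat 2 (-136 : ℚ) = 3 := by
    rw [padicValRat.neg, show (136 : ℚ) = 2 ^ 3 * 17 by norm_num,
      padicValRat.mul (by norm_num) (by norm_num), h17, padicValRat_two_two_pow]
    norm_num
  have h3 : padicValRat 2 (x ^ 3) = 3 * padicValRat 2 x := by
    rw [padicValRat.pow]; norm_num
  have key := congrArg (padicValRat 2) h
  rw [sub_eq_add_neg, padicValRat.mul (mul_ne_zero (by norm_num) hy) hz,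
    padicValRat.mul (by norm_num) hy, padicValRat.mul hx hl,
    show (4 : ℚ) = 2 ^ 2 by norm_num, padicValRat_two_two_pow] at key
  push_cast at key
  have hx3 : x ^ 3 ≠ 0 := pow_ne_zero 3 hx
  rcases lt_trichotomy (padicValRat 2 x) 0 with hv | hv | hv
  · have e1 := padicValRat.add_eq_of_lt (p := 2) hy hx3 (by norm_num) (by rw [h3, h17]; lia)
    have e2 := padicValRat.add_eq_of_lt (p := 2) hl hx3 (by norm_num) (by rw [h3, h136]; lia)
    grind
  · have e1 := padicValRat.min_le_padicValRat_add (p := 2) hy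
    have e2 := padicValRat.add_eq_of_lt (p := 2) hl hx3 (by norm_num) (by rw [h3, h136]; lia)
    grind
  · have e1 := padicValRat.add_eq_of_lt (p := 2) (add_comm (x ^ 3) 17 ▸ hy) (by norm_num) hx3
      (by rw [h3, h17]; lia)
    have e2 := padicValRat.min_le_padicValRat_add (p := 2) hl
    rw [add_comm] at e1
    grind

theorem padicValRat_seventeen_seventeen : padicValRat 17 (17 : ℚ) = 1 :=
  padicValRat.self (p := 17) (by norm_num)

theorem sq_ne_seventeen (y : ℚ) : y ^ 2 ≠ 17 := by
  have : Fact (Nat.Prime 17) := ⟨by norm_num⟩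
  intro h
  have h' := congrArg (padicValRat 17) h
  rw [padicValRat.pow, padicValRat_seventeen_seventeen] at h'
  lia

theorem pow_three_add_seventeen_ne_zero (x : ℚ) : x ^ 3 + 17 ≠ 0 := by
  have : Fact (Nat.Prime 17) := ⟨by norm_num⟩
  intro h
  have h' := congrArg (padicValRat 17) (eq_neg_of_add_eq_zero_left h)
  rw [padicValRat.pow, padicValRat.neg, padicValRat_seventeen_seventeen] at h'
  lia

theorem E_equation_iff (x y : ℚ) : E.toAffine.Equation x y ↔ y ^ 2 = x ^ 3 + 17 := by
  rw [equation_iff]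
  simp [E]

theorem ne_zero_of_E_equation {x y : ℚ} (h : E.toAffine.Equation x y) : x ≠ 0 := by
  rintro rfl
  exact sq_ne_seventeen y (by simpa using (E_equation_iff 0 y).mp h)

/-- The absolute value of the `2`-adic valuation of the `x`-coordinate, with value `0` at `O`. -/
def absValX : E.toAffine.Point → ℤ
  | .zero => 0
  | .some x _ _ => |padicValRat 2 x|

theorem absValX_lt_absValX_add_self {P : E.toAffine.Point} (hP : P ≠ 0) :
    P + P ≠ 0 ∧ absValX P < absValX (P + P) := by
  match P, hP with
  | .zero, hP => exact absurd rfl hP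
  | .some x y hxy, _ =>
    have he := (E_equation_iff x y).mp hxy.1
    have hne := pow_three_add_seventeen_ne_zero x
    have hy0 : y ≠ 0 := by
      rintro rfl
      exact hne (by rw [← he]; norm_num)
    have hy : y ≠ E.toAffine.negY x y := by
      simp only [negY, E]
      intro h
      exact hy0 (by linarith)
    have hsum := Point.add_self_of_Y_ne (h₁ := hxy) hy
    rw [hsum]
    refine ⟨Point.some_ne_zero _, ?_⟩
    have heq := (nonsingular_add hxy hxy (fun h => hy h.2)).1
    refine abs_padicValRat_two_lt (ne_zero_of_E_equation hxy.1) (ne_zero_of_E_equation heq) hne ?_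
    have hslope : E.toAffine.slope x x y y = 3 * x ^ 2 / (2 * y) := by
      rw [slope_of_Y_ne rfl hy]
      simp [negY, E, two_mul]
    rw [hslope, ← he]
    simp only [addX, E]
    field_simp
    linear_combination (-32 * x) * he

theorem eq_zero_of_isOfFinAddOrder {P : E.toAffine.Point} (hP : IsOfFinAddOrder P) : P = 0 := by
  by_contra h0
  have key (n : ℕ) : 2 ^ n • P ≠ 0 := by
    induction n with
    | zero => simpa using h0
    | succ n ih =>
      rw [pow_succ, mul_nsmul, two_nsmul]
      exact (absValX_lt_absValX_add_self ih).1
  have hmono : StrictMono fun n : ℕ => absValX (2 ^ n • P) := by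
    refine strictMono_nat_of_lt_succ fun n => ?_
    rw [pow_succ, mul_nsmul, two_nsmul]
    exact (absValX_lt_absValX_add_self (key n)).2
  have hinj : Function.Injective fun n : ℕ => 2 ^ n • P := fun m n h =>
    hmono.injective (congrArg absValX h)
  refine Set.infinite_range_of_injective hinj (hP.finite_multiples.subset ?_)
  rintro _ ⟨n, rfl⟩
  exact ⟨2 ^ n, rfl⟩

/-- The torsion subgroup of `E(ℚ)` is trivial: the only point of finite order is the
identity `O`; equivalently, every nonzero rational point of `E` has infinite order. -/
theorem torsion_trivial :
    (∀ P : E.toAffine.Point, IsOfFinAddOrder P → P = 0) ∧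
    (∀ P : E.toAffine.Point, P ≠ 0 → ¬ IsOfFinAddOrder P) :=
  ⟨fun _ => eq_zero_of_isOfFinAddOrder, fun _ h0 hP => h0 (eq_zero_of_isOfFinAddOrder hP)⟩
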